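/- arXiv:2506.22578 — 3 statements merged into one kernel-verified Lean document; each statement's English description precedes it below -/
import Mathlib

section
/- Let Y be a nonempty finite type, s : Y → ℝ a vector of logits, and let softmax(s)(y) = exp(s(y)) / Σ_{y'∈Y} exp(s(y')). Fix y* ∈ Y, let r : Y → ℝ satisfy r(y) > 0 for all y, let c ∈ ℝ, and let p, q : Y → ℝ be probability weights (nonnegative, summing to 1) with p(y*) = 0 and q(y*) = 0. For t ∈ ℝ define the perturbed logits s_t(y) = s(y) + t·[y = y*] and the objective F(t) = Σ_y p(y)·(log softmax(s_t)(y) − log r(y) + c) − log( Σ_y q(y) · (softmax(s_t)(y)/r(y)) · e^c ). Then F is differentiable at 0 and F'(0) = 0. (DV/MINE Starvation Theorem: with the log-ratio critic, the DV objective provides no gradient signal along the logit of a response y* that is outside the support of both the chosen and the negative-pool distributions.) -/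
open Real Finset

/-- Softmax over a finite type: `softmax s y = exp (s y) / ∑ y', exp (s y')`. -/
noncomputable def softmax {Y : Type*} [Fintype Y] (s : Y → ℝ) (y : Y) : ℝ :=
  Real.exp (s y) / ∑ y', Real.exp (s y')

/-!
The log-softmax of `s` is `s` minus the scalar `log ∑ exp s`, and the Donsker–Varadhan objective
does not change when a constant is added to the critic: its two terms shift by the same amount. So
the objective only sees the raw logits, and these only on the supports of `p` and `q`. Raising the
logit of `y*` therefore leaves the objective constant, not merely stationary.
-/

/-- The Donsker–Varadhan objective `E_p[T] - log E_q[exp T]` of a critic `T` on a finite type,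
whose supremum over `T` is `KL(p ‖ q)` when `p` and `q` are probability weights; here they are
plain real-valued functions. -/
noncomputable def dvFunctional {Y : Type*} [Fintype Y] (p q T : Y → ℝ) : ℝ :=
  ∑ y, p y * T y - log (∑ y, q y * exp (T y))

section

variable {Y : Type*} [Fintype Y] {p q T T' v w r : Y → ℝ}

lemma sum_mul_exp_pos (hq : 0 < q) (T : Y → ℝ) : 0 < ∑ y, q y * exp (T y) := by
  obtain ⟨hq_nonneg, y, hy⟩ := Pi.lt_def.mp hq
  exact sum_pos' (fun z _ ↦ mul_nonneg (hq_nonneg z) (exp_pos _).le)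
    ⟨y, mem_univ y, mul_pos hy (exp_pos _)⟩

lemma dvFunctional_congr (h : Set.EqOn T T' (p.support ∪ q.support)) :
    dvFunctional p q T = dvFunctional p q T' := by
  have hp (y : Y) : p y * T y = p y * T' y := by
    by_cases hy : p y = 0
    · simp [hy]
    · rw [h (.inl hy)]
  have hq (y : Y) : q y * exp (T y) = q y * exp (T' y) := by
    by_cases hy : q y = 0
    · simp [hy]
    · rw [h (.inr hy)]
  simp only [dvFunctional, hp, hq]

lemma dvFunctional_add_const (hp : ∑ y, p y = 1) (hq : 0 < q) (T : Y → ℝ) (k : ℝ) :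
    dvFunctional p q (fun y ↦ T y + k) = dvFunctional p q T := by
  have hmean : ∑ y, p y * (T y + k) = ∑ y, p y * T y + k := by
    simp only [mul_add, sum_add_distrib, ← sum_mul, hp, one_mul]
  have hlog : log (∑ y, q y * exp (T y + k)) = log (∑ y, q y * exp (T y)) + k := by
    simp only [exp_add, ← mul_assoc, ← sum_mul]
    rw [log_mul (sum_mul_exp_pos hq T).ne' (exp_ne_zero k), log_exp]
  rw [dvFunctional, hmean, hlog, add_sub_add_right_eq_sub, dvFunctional]

lemma dvFunctional_log_add_sub_log (hw : ∀ y, 0 < w y) (hr : ∀ y, 0 < r y) (c : ℝ) :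
    dvFunctional p q (fun y ↦ log (w y) + (c - log (r y))) =
      (∑ y, p y * (log (w y) - log (r y) + c)) - log (∑ y, q y * (w y / r y) * exp c) := by
  have hcritic (y : Y) : log (w y) + (c - log (r y)) = log (w y) - log (r y) + c := by ring
  have hexp (y : Y) : exp (log (w y) - log (r y) + c) = w y / r y * exp c := by
    rw [exp_add, exp_sub, exp_log (hw y), exp_log (hr y)]
  simp only [dvFunctional, hcritic, hexp, mul_assoc]

lemma sum_exp_pos [Nonempty Y] (s : Y → ℝ) : 0 < ∑ y, exp (s y) :=
  sum_pos (fun _ _ ↦ exp_pos _) univ_nonempty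

lemma softmax_pos (s : Y → ℝ) (y : Y) : 0 < softmax s y :=
  have : Nonempty Y := ⟨y⟩
  div_pos (exp_pos _) (sum_exp_pos s)

lemma log_softmax (s : Y → ℝ) (y : Y) : log (softmax s y) = s y - log (∑ y', exp (s y')) := by
  have : Nonempty Y := ⟨y⟩
  rw [softmax, log_div (exp_ne_zero _) (sum_exp_pos s).ne', log_exp]

lemma dvFunctional_log_softmax_add (hp : ∑ y, p y = 1) (hq : 0 < q) (s b : Y → ℝ) :
    dvFunctional p q (fun y ↦ log (softmax s y) + b y) = dvFunctional p q (s + b) := by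
  rw [← dvFunctional_add_const hp hq (s + b) (-log (∑ y', exp (s y')))]
  congr 1 with y
  rw [log_softmax, Pi.add_apply]
  ring

theorem dv_mine_starvation_general (hp : ∑ y, p y = 1) (hq : 0 < q)
    (hv : Set.EqOn v 0 (p.support ∪ q.support)) (s b : Y → ℝ) (t₀ : ℝ) :
    HasDerivAt
      (fun t ↦ dvFunctional p q (fun y ↦ log (softmax (fun y' ↦ s y' + t * v y') y) + b y))
      0 t₀ := by
  have hconst (t : ℝ) :
      dvFunctional p q (fun y ↦ log (softmax (fun y' ↦ s y' + t * v y') y) + b y) =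
        dvFunctional p q (s + b) := by
    rw [dvFunctional_log_softmax_add hp hq]
    refine dvFunctional_congr fun y hy ↦ ?_
    simp [hv hy]
  simpa only [hconst] using hasDerivAt_const t₀ (dvFunctional p q (s + b))

end

/-- **DV/MINE Starvation Theorem.** With the log-ratio critic
`T(y) = log softmax(s)(y) − log r(y) + c`, if the chosen distribution `p` and the
negative-pool distribution `q` both assign zero mass to `y*`, then the DV objective
has zero derivative along the logit of `y*`. -/
theorem dv_mine_starvation {Y : Type*} [Fintype Y] [Nonempty Y] [DecidableEq Y]
    (s : Y → ℝ) (ystar : Y) (r : Y → ℝ) (hr : ∀ y, 0 < r y) (c : ℝ)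
    (p q : Y → ℝ)
    (hp0 : ∀ y, 0 ≤ p y) (hp1 : ∑ y, p y = 1)
    (hq0 : ∀ y, 0 ≤ q y) (hq1 : ∑ y, q y = 1)
    (hpstar : p ystar = 0) (hqstar : q ystar = 0) :
    HasDerivAt (fun t : ℝ =>
      (∑ y, p y *
        (Real.log (softmax (fun y' => s y' + t * (if y' = ystar then 1 else 0)) y)
          - Real.log (r y) + c))
      - Real.log (∑ y, q y *
          (softmax (fun y' => s y' + t * (if y' = ystar then 1 else 0)) y / r y) *
          Real.exp c))
      0 0 := by
  have hq : 0 < q := lt_of_le_of_ne hq0 (by rintro rfl; simp at hq1)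
  have hv : Set.EqOn (fun y ↦ if y = ystar then (1 : ℝ) else 0) 0 (p.support ∪ q.support) := by
    intro y hy
    refine if_neg ?_
    rintro rfl
    exact hy.elim (· hpstar) (· hqstar)
  simpa only [dvFunctional_log_add_sub_log (softmax_pos _) hr c] using
    dv_mine_starvation_general hp1 hq hv s (fun y ↦ c - log (r y)) 0
end

section
/- Let α > 0, β > 0, and for π⁺, π⁻ > 0 let ℓ(π⁺, π⁻) = log(1 + α·(π⁻/π⁺)^β) be the DPO loss. Then the ratio of gradient magnitudes satisfies |∂ℓ/∂π⁻| / |∂ℓ/∂π⁺| = π⁺/π⁻. (The gradient on the rejected probability grows faster than that on the chosen probability exactly by the factor π⁺/π⁻.) -/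
open Real

/-- The DPO loss `ℓ(π⁺, π⁻) = log (1 + α·(π⁻/π⁺)^β)` (real power). -/
noncomputable def dpoLoss (α β πp πm : ℝ) : ℝ :=
  Real.log (1 + α * (πm / πp) ^ β)

/-!
The loss depends on `(π⁺, π⁻)` only through the quotient `π⁻ / π⁺`, so it is homogeneous of degree
zero. Euler's relation `π⁺ ∂ℓ/∂π⁺ + π⁻ ∂ℓ/∂π⁻ = 0` therefore determines the ratio of the two partial
derivatives as soon as they do not vanish, whatever the function of the quotient is.
-/

section Quotient

variable {𝕜 F : Type*} [NontriviallyNormedField 𝕜] [NormedAddCommGroup F] [NormedSpace 𝕜 F]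
  {f : 𝕜 → F} {x y : 𝕜}

theorem deriv_comp_div_const (f : 𝕜 → F) (x y : 𝕜) :
    deriv (fun t ↦ f (t / x)) y = x⁻¹ • deriv f (y / x) := by
  simpa only [div_eq_inv_mul] using deriv_comp_mul_left x⁻¹ f y

theorem deriv_comp_const_div (hf : DifferentiableAt 𝕜 f (y / x)) (hx : x ≠ 0) :
    deriv (fun s ↦ f (y / s)) x = (-y / x ^ 2) • deriv f (y / x) := by
  have hdiv : DifferentiableAt 𝕜 (fun s ↦ y / s) x :=
    (differentiableAt_const y).fun_div differentiableAt_id hx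
  rw [← deriv_const_div_id y]
  exact deriv.scomp x hf hdiv

theorem deriv_comp_const_div_eq_neg_smul_deriv_comp_div_const
    (hf : DifferentiableAt 𝕜 f (y / x)) (hx : x ≠ 0) :
    deriv (fun s ↦ f (y / s)) x = -(y / x) • deriv (fun t ↦ f (t / x)) y := by
  rw [deriv_comp_const_div hf hx, deriv_comp_div_const, smul_smul]
  congr 1
  ring

theorem norm_deriv_comp_div_const_div_norm_deriv_comp_const_div
    (hf : deriv f (y / x) ≠ 0) (hx : x ≠ 0) :
    ‖deriv (fun t ↦ f (t / x)) y‖ / ‖deriv (fun s ↦ f (y / s)) x‖ = ‖x / y‖ := by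
  have hne : ‖deriv (fun t ↦ f (t / x)) y‖ ≠ 0 := by
    rw [deriv_comp_div_const]
    exact norm_ne_zero_iff.mpr (smul_ne_zero (inv_ne_zero hx) hf)
  rw [deriv_comp_const_div_eq_neg_smul_deriv_comp_div_const
    (differentiableAt_of_deriv_ne_zero hf) hx, norm_smul, norm_neg, div_mul_cancel_right₀ hne,
    ← norm_inv, inv_div]

end Quotient

theorem hasDerivAt_log_one_add_mul_rpow {α β z : ℝ} (hz : z ≠ 0) (h : 1 + α * z ^ β ≠ 0) :
    HasDerivAt (fun t ↦ log (1 + α * t ^ β)) (α * (β * z ^ (β - 1)) / (1 + α * z ^ β)) z :=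
  (((hasDerivAt_rpow_const (.inl hz)).const_mul α).const_add 1).log h

theorem deriv_log_one_add_mul_rpow_ne_zero {α β z : ℝ} (hα : α ≠ 0) (hβ : β ≠ 0) (hz : 0 < z)
    (h : 1 + α * z ^ β ≠ 0) : deriv (fun t ↦ log (1 + α * t ^ β)) z ≠ 0 := by
  rw [(hasDerivAt_log_one_add_mul_rpow hz.ne' h).deriv]
  exact div_ne_zero (mul_ne_zero hα (mul_ne_zero hβ (rpow_pos_of_pos hz _).ne')) h

theorem dpo_gradient_ratio_general {α β πp πm : ℝ} (hα : α ≠ 0) (hβ : β ≠ 0)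
    (hz : 0 < πm / πp) (hlog : 0 < 1 + α * (πm / πp) ^ β) :
    |deriv (fun x ↦ dpoLoss α β πp x) πm| / |deriv (fun x ↦ dpoLoss α β x πm) πp|
      = πp / πm := by
  have hπp : πp ≠ 0 := (div_ne_zero_iff.mp hz.ne').2
  have hderiv := deriv_log_one_add_mul_rpow_ne_zero hα hβ hz hlog.ne'
  have hratio : 0 < πp / πm := by rwa [← inv_div, inv_pos]
  rw [← abs_of_pos hratio]
  exact norm_deriv_comp_div_const_div_norm_deriv_comp_const_div hderiv hπp

/-- **Gradient-magnitude ratio of the DPO loss**: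
`|∂ℓ/∂π⁻| / |∂ℓ/∂π⁺| = π⁺/π⁻`. -/
theorem dpo_gradient_ratio (α β πp πm : ℝ)
    (hα : 0 < α) (hβ : 0 < β) (hπp : 0 < πp) (hπm : 0 < πm) :
    |deriv (fun x => dpoLoss α β πp x) πm| / |deriv (fun x => dpoLoss α β x πm) πp|
      = πp / πm :=
  dpo_gradient_ratio_general hα.ne' hβ.ne' (div_pos hπm hπp) (by positivity)
end

section
/- Let Y be a nonempty finite type, and let p, q : Y → ℝ be probability weights such that q(y) > 0 whenever p(y) > 0. Then for every function T : Y → ℝ, Σ_y p(y)·T(y) − log( Σ_y q(y)·exp(T(y)) ) ≤ Σ_{y : p(y) > 0} p(y)·log( p(y)/q(y) ). (Donsker–Varadhan lower bound on the Kullback–Leibler divergence, the variational inequality underlying the MINE estimator.) -/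
open Real Finset

/-! The log-sum inequality `P log (P / Q) ≤ ∑ pᵢ log (pᵢ / qᵢ)`, for weights of total masses `P` and
`Q`, is Jensen's inequality for `x ↦ x log x` at the points `pᵢ / qᵢ` with weights `qᵢ`. Replacing
`q` by the exponentially tilted weights `q exp T` turns its right-hand side into
`∑ pᵢ log (pᵢ / qᵢ) - ∑ pᵢ Tᵢ`, which is the Donsker–Varadhan bound. -/

theorem sum_mul_log_sum_div_sum_le {ι : Type*} {s : Finset ι} {p q : ι → ℝ}
    (hp : ∀ i ∈ s, 0 ≤ p i) (hq : ∀ i ∈ s, 0 ≤ q i) (hpq : ∀ i ∈ s, q i = 0 → p i = 0) :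
    (∑ i ∈ s, p i) * log ((∑ i ∈ s, p i) / ∑ i ∈ s, q i) ≤
      ∑ i ∈ s, p i * log (p i / q i) := by
  have mul_ratio : ∀ i ∈ s, q i * (p i / q i) = p i := fun i hi ↦
    mul_div_cancel_of_imp' (hpq i hi)
  rcases (sum_nonneg hq).eq_or_lt with hQ | hQ
  · have hp_zero : ∀ i ∈ s, p i = 0 := fun i hi ↦
      hpq i hi ((sum_eq_zero_iff_of_nonneg hq).mp hQ.symm i hi)
    rw [sum_eq_zero hp_zero, zero_mul]
    exact (sum_eq_zero fun i hi ↦ by rw [hp_zero i hi, zero_mul]).ge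
  · have jensen := convexOn_mul_log.map_centerMass_le hq hQ
      fun i hi ↦ Set.mem_Ici.mpr (div_nonneg (hp i hi) (hq i hi))
    simp only [centerMass, smul_eq_mul, Function.comp_apply, ← mul_assoc] at jensen
    rw [sum_congr rfl mul_ratio,
      sum_congr rfl fun i hi ↦ congrArg (· * log (p i / q i)) (mul_ratio i hi),
      mul_assoc, mul_le_mul_iff_right₀ (inv_pos.mpr hQ), inv_mul_eq_div] at jensen
    exact jensen

theorem mul_log_div_mul_exp {a b : ℝ} (hab : b = 0 → a = 0) (t : ℝ) :
    a * log (a / (b * exp t)) = a * log (a / b) - a * t := by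
  rcases eq_or_ne a 0 with rfl | ha
  · simp
  · rw [← div_div, log_div (div_ne_zero ha (mt hab ha)) (exp_ne_zero t), log_exp, mul_sub]

theorem donsker_varadhan_bound_general {ι : Type*} {s : Finset ι} {p q : ι → ℝ}
    (hp : ∀ i ∈ s, 0 ≤ p i) (hq : ∀ i ∈ s, 0 ≤ q i) (hac : ∀ i ∈ s, 0 < p i → 0 < q i)
    (T : ι → ℝ) :
    ∑ i ∈ s, p i * T i - (∑ i ∈ s, p i) * log ((∑ i ∈ s, q i * exp (T i)) / ∑ i ∈ s, p i) ≤
      ∑ i ∈ s with 0 < p i, p i * log (p i / q i) := by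
  have hpq : ∀ i ∈ s, q i = 0 → p i = 0 := fun i hi hqi ↦
    ((hp i hi).eq_of_not_lt fun hpi ↦ (hac i hi hpi).ne' hqi).symm
  have log_sum := sum_mul_log_sum_div_sum_le (q := fun i ↦ q i * exp (T i)) hp
    (fun i hi ↦ mul_nonneg (hq i hi) (exp_nonneg _))
    (fun i hi h ↦ hpq i hi ((mul_eq_zero_iff_right (exp_ne_zero _)).mp h))
  have sum_tilt : ∑ i ∈ s, p i * log (p i / (q i * exp (T i))) =
      ∑ i ∈ s, p i * log (p i / q i) - ∑ i ∈ s, p i * T i := by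
    rw [← sum_sub_distrib]
    exact sum_congr rfl fun i hi ↦ mul_log_div_mul_exp (hpq i hi) (T i)
  have sum_support : ∑ i ∈ s with 0 < p i, p i * log (p i / q i) =
      ∑ i ∈ s, p i * log (p i / q i) :=
    sum_filter_of_ne fun i hi h ↦ (hp i hi).lt_of_ne' (left_ne_zero_of_mul h)
  rw [sum_tilt, ← inv_div, log_inv] at log_sum
  linarith

/-- **Donsker–Varadhan lower bound on the KL divergence.** For probability weights `p`, `q`
on a finite type with `p ≪ q`, and any critic `T`,
`Σ_y p(y)·T(y) − log (Σ_y q(y)·e^{T(y)}) ≤ KL(p‖q)`. -/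
theorem donsker_varadhan_bound {Y : Type*} [Fintype Y] [Nonempty Y]
    (p q : Y → ℝ)
    (hp0 : ∀ y, 0 ≤ p y) (hp1 : ∑ y, p y = 1)
    (hq0 : ∀ y, 0 ≤ q y) (hq1 : ∑ y, q y = 1)
    (hac : ∀ y, 0 < p y → 0 < q y)
    (T : Y → ℝ) :
    (∑ y, p y * T y) - Real.log (∑ y, q y * Real.exp (T y)) ≤
      ∑ y ∈ Finset.univ.filter (fun y => 0 < p y), p y * Real.log (p y / q y) := by
  simpa only [hp1, one_mul, div_one] using donsker_varadhan_bound_general (s := univ)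
    (fun y _ ↦ hp0 y) (fun y _ ↦ hq0 y) (fun y _ ↦ hac y) T
end
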